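/- For every integer k ≥ 0, the sum over all integers p of binom(2k, k+p)·|p| equals k·binom(2k, k). (Here binom(m, j) is defined to be 0 when j < 0 or j > m, so the sum is effectively over −k ≤ p ≤ k.) -/

import Mathlib

/-!
Twice the sum is the absolute deviation sum `∑ j ≤ n, |n - 2 * j| * n.choose j` at `n = 2 * k`.
Following de Moivre, the signed partial sums `∑ j < m, (n - 2 * j) * n.choose j` telescope to
`m * n.choose m`. In particular the full signed sum vanishes, since `n.choose (n + 1) = 0`, so the
terms with `n < 2 * j` contribute as much to the absolute sum as those with `2 * j < n`.
-/

open Finset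

theorem sum_range_sub_two_mul_mul_choose (n m : ℕ) :
    ∑ j ∈ range m, ((n : ℤ) - 2 * j) * n.choose j = m * n.choose m := by
  induction m with
  | zero => simp
  | succ m ih =>
    have choose_succ : (n.choose (m + 1) : ℤ) * (m + 1) = n.choose m * (n - m) := by
      obtain hmn | hnm := le_or_gt m n
      · rw [← Nat.cast_sub hmn]
        exact_mod_cast n.choose_succ_right_eq m
      · simp [Nat.choose_eq_zero_of_lt hnm, Nat.choose_eq_zero_of_lt (hnm.trans m.lt_succ_self)]
    rw [sum_range_succ, ih]
    push_cast
    linear_combination -choose_succ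

theorem sum_range_abs_sub_two_mul_mul_choose {n m : ℕ} (hnm : n ≤ 2 * m) (hmn : 2 * m ≤ n + 2) :
    ∑ j ∈ range (n + 1), |(n : ℤ) - 2 * j| * n.choose j = 2 * (m * n.choose m) := by
  have hm : m ≤ n + 1 := by omega
  have signed_sum : ∑ j ∈ range (n + 1), ((n : ℤ) - 2 * j) * n.choose j = 0 := by
    simp [sum_range_sub_two_mul_mul_choose]
  have lower : ∑ j ∈ range m, |(n : ℤ) - 2 * j| * n.choose j =
      ∑ j ∈ range m, ((n : ℤ) - 2 * j) * n.choose j := by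
    refine sum_congr rfl fun j hj => ?_
    rw [abs_of_nonneg (by have := mem_range.mp hj; omega)]
  have upper : ∑ j ∈ Ico m (n + 1), |(n : ℤ) - 2 * j| * n.choose j =
      -∑ j ∈ Ico m (n + 1), ((n : ℤ) - 2 * j) * n.choose j := by
    rw [← sum_neg_distrib]
    refine sum_congr rfl fun j hj => ?_
    rw [abs_of_nonpos (by have := mem_Ico.mp hj; omega), neg_mul]
  rw [← sum_range_add_sum_Ico _ hm] at signed_sum ⊢
  rw [lower, upper]
  linear_combination 2 * sum_range_sub_two_mul_mul_choose n m - signed_sum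

theorem sum_Icc_neg_eq_sum_range {M : Type*} [AddCommMonoid M] (f : ℤ → M) (k : ℕ) :
    ∑ p ∈ Icc (-(k : ℤ)) k, f p = ∑ j ∈ range (2 * k + 1), f (j - k) := by
  have card_Icc : ((k : ℤ) + 1 - -k).toNat = 2 * k + 1 := by omega
  rw [Int.Icc_eq_finset_map, card_Icc, sum_map]
  simp [sub_eq_neg_add]

/-- **Lemma (Best et al).** For every integer `k ≥ 0`,
`∑_p binom(2k, k+p) * |p| = k * binom(2k, k)`, where the sum is over all
integers `p` (effectively `-k ≤ p ≤ k`, since `binom(m, j) = 0` for `j < 0`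
or `j > m`). -/
theorem binom_abs_sum (k : ℕ) :
    ∑ p ∈ Finset.Icc (-(k : ℤ)) (k : ℤ),
      (((2 * k).choose ((k : ℤ) + p).toNat : ℤ) * |p|) =
    (k : ℤ) * ((2 * k).choose k : ℤ) := by
  refine mul_left_cancel₀ (two_ne_zero (α := ℤ)) ?_
  rw [sum_Icc_neg_eq_sum_range, mul_sum,
    ← sum_range_abs_sub_two_mul_mul_choose (n := 2 * k) le_rfl (by omega)]
  refine sum_congr rfl fun j _ => ?_
  have abs_double : |((2 * k : ℕ) : ℤ) - 2 * j| = 2 * |(j : ℤ) - k| := by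
    rw [abs_sub_comm, Nat.cast_mul, Nat.cast_ofNat, ← mul_sub, abs_mul, abs_two]
  rw [add_sub_cancel, Int.toNat_natCast, abs_double]
  ring
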